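/- Let A be a commutative ring, let M be a flat A-module, let N be an A-module and let d ≥ 0 be an integer. Let f be a polynomial law from M to N (a family of maps f_B : M ⊗_A B → N ⊗_A B, for B ranging over commutative A-algebras, natural in B) which is homogeneous of degree d, i.e. f_B(λ·m) = λ^d · f_B(m) for every A-algebra B, every λ ∈ B and every m ∈ M ⊗_A B. Then there exists a unique A-linear map f̃ : TS^d_A(M) → N with the following property: for every commutative A-algebra B and every m ∈ M ⊗_A B, one has (f̃ ⊗ id_B)(x_m) = f_B(m), where x_m is the unique element of TS^d_A(M) ⊗_A B whose image under the canonical base-change isomorphism TS^d_A(M) ⊗_A B ≅ TS^d_B(M ⊗_A B) (which is bijective because M is flat) is the symmetric tensor m^{⊗ d} = m ⊗ ⋯ ⊗ m ∈ TS^d_B(M ⊗_A B). -/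

import Mathlib

/-!
The theorem is reduced to finite free modules, where it is a computation with coordinates.

*Finite free modules.* Let `K` have basis `b_i`, `i ∈ ι`. By naturality a law `f` on `K` is
determined by its value at the generic element `∑ X_i ⊗ b_i` of `A[X] ⊗ K`, and homogeneity says
that this value is `∑ X^α ⊗ n_α` with `α` of degree `d`. Coordinates of a symmetric tensor at words
of length `d` with the same content agree, so `t ↦ ∑ coord_α(t) n_α` is a well-defined linear map;
it represents `f` (`exists_isRep_of_free`). It is the only one: the sums `γ_α` of basis tensors over
words of content `α` span `TS^d(K)`, and `∑ X^α ⊗ γ_α` corresponds to the `d`-th tensor power of the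
generic element, so the values at `γ_α` are forced (`isRep_unique_of_free`).

*Flat modules.* The key fact is `factor_of_flat`: if `φ : K → M` with `K` finite free kills a tensor
in `(B ⊗ K)^{⊗ d}`, then `φ` factors through a finite free module in which that tensor already
dies. It follows from the equational criterion for flatness by induction on `d`. Consequently
symmetric tensors over `M` lift to finite free modules, the maps representing the pullbacks of `f`
to finite free modules glue to a linear map on `TS^d(M)` (`exists_glue`), this map represents `f`
(`isRep_of_pull`), and uniqueness is inherited from the free case (`isRep_unique`).
-/

open scoped TensorProduct

/-- The `d`-th tensor power `M^{⊗_A d}` of an `A`-module `M`. -/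
abbrev TensorPow (A : Type*) [CommRing A] (M : Type*) [AddCommGroup M] [Module A M] (d : ℕ) :=
  PiTensorProduct A (fun _ : Fin d => M)

/-- The submodule `TS^d_A(M)` of symmetric tensors of degree `d`: the tensors in `M^{⊗_A d}`
fixed by the permutation action of the symmetric group `𝔖_d` on the `d` tensor factors. -/
def symmetricTensors (A : Type*) [CommRing A] (M : Type*) [AddCommGroup M] [Module A M]
    (d : ℕ) : Submodule A (TensorPow A M d) where
  carrier := {x | ∀ σ : Equiv.Perm (Fin d), PiTensorProduct.reindex A (fun _ => M) σ x = x}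
  add_mem' := by
    intro a b ha hb σ
    simp only [map_add, ha σ, hb σ]
  zero_mem' := by
    intro σ
    simp
  smul_mem' := by
    intro c x hx σ
    simp only [map_smul, hx σ]

/-- The canonical comparison map `M^{⊗_A d} → (B ⊗_A M)^{⊗_B d}`, sending a pure tensor
`m_1 ⊗ ⋯ ⊗ m_d` to `(1 ⊗ m_1) ⊗ ⋯ ⊗ (1 ⊗ m_d)`. -/
noncomputable def tensorPowCompare (A : Type*) [CommRing A] (M : Type*) [AddCommGroup M]
    [Module A M] (d : ℕ) (B : Type*) [CommRing B] [Algebra A B] :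
    TensorPow A M d →ₗ[A] TensorPow B (B ⊗[A] M) d :=
  PiTensorProduct.lift
    (((PiTensorProduct.tprod B (s := fun _ : Fin d => B ⊗[A] M)).restrictScalars A).compLinearMap
      (fun _ => TensorProduct.mk A B M 1))

/-- The canonical base-change map `B ⊗_A TS^d_A(M) → (B ⊗_A M)^{⊗_B d}`, sending
`b ⊗ (m_1 ⊗ ⋯ ⊗ m_d)` to `b • ((1 ⊗ m_1) ⊗ ⋯ ⊗ (1 ⊗ m_d))`; its corestriction to
`TS^d_B(B ⊗_A M)` is the canonical base-change comparison map of symmetric tensors. -/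
noncomputable def symmetricTensorsBaseChange (A : Type*) [CommRing A] (M : Type*)
    [AddCommGroup M] [Module A M] (d : ℕ) (B : Type*) [CommRing B] [Algebra A B] :
    B ⊗[A] (symmetricTensors A M d) →ₗ[B] TensorPow B (B ⊗[A] M) d :=
  LinearMap.liftBaseChange B
    ((tensorPowCompare A M d B) ∘ₗ (symmetricTensors A M d).subtype)

universe u

/-! ### Factorization of relations in tensor powers of flat modules -/

section Aux

open TensorProduct

/-- The isomorphism `V^{⊗(d+1)} ≃ V^{⊗d} ⊗ V` splitting off the last tensor factor. -/
noncomputable def tensorPowSucc (B : Type*) [CommRing B] (V : Type*) [AddCommGroup V] [Module B V]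
    (d : ℕ) : TensorPow B V (d + 1) ≃ₗ[B] TensorPow B V d ⊗[B] V :=
  (TensorPower.mulEquiv (R := B) (M := V) (n := d) (m := 1)).symm ≪≫ₗ
    TensorProduct.congr (LinearEquiv.refl _ _) (PiTensorProduct.subsingletonEquiv (0 : Fin 1))

lemma tensorPowSucc_tprod (B : Type*) [CommRing B] (V : Type*) [AddCommGroup V] [Module B V]
    (d : ℕ) (v : Fin (d + 1) → V) :
    tensorPowSucc B V d (PiTensorProduct.tprod B v) =
      PiTensorProduct.tprod B (fun i : Fin d => v i.castSucc) ⊗ₜ v (Fin.last d) := by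
  simp [tensorPowSucc, TensorPower.mulEquiv, PiTensorProduct.tmulEquiv_symm_apply]
  rfl

/-- The map `(B ⊗_A M)^{⊗_B d} → (B ⊗_A M')^{⊗_B d}` induced by `φ : M → M'`. -/
noncomputable def tensorPowMap {A : Type*} [CommRing A] {M M' : Type*} [AddCommGroup M]
    [Module A M] [AddCommGroup M'] [Module A M'] (d : ℕ) (B : Type*) [CommRing B] [Algebra A B]
    (φ : M →ₗ[A] M') : TensorPow B (B ⊗[A] M) d →ₗ[B] TensorPow B (B ⊗[A] M') d :=
  PiTensorProduct.map fun _ => φ.baseChange B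

section

variable {A : Type*} [CommRing A] {M M' M'' : Type*} [AddCommGroup M] [Module A M]
  [AddCommGroup M'] [Module A M'] [AddCommGroup M''] [Module A M''] (d : ℕ)
  (B : Type*) [CommRing B] [Algebra A B]

lemma tensorPowMap_tprod (φ : M →ₗ[A] M') (v : Fin d → B ⊗[A] M) :
    tensorPowMap d B φ (PiTensorProduct.tprod B v) =
      PiTensorProduct.tprod B (fun i => φ.baseChange B (v i)) := by
  simp [tensorPowMap]

lemma tensorPowMap_comp (ψ : M' →ₗ[A] M'') (φ : M →ₗ[A] M') (y : TensorPow B (B ⊗[A] M) d) :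
    tensorPowMap d B (ψ ∘ₗ φ) y = tensorPowMap d B ψ (tensorPowMap d B φ y) := by
  simp only [tensorPowMap, LinearMap.baseChange_comp, PiTensorProduct.map_comp,
    LinearMap.comp_apply]

/-- The isomorphism `(B ⊗_A M)^{⊗_B (d+1)} ≃ (B ⊗_A M)^{⊗_B d} ⊗_A M`. -/
noncomputable def tensorPowSuccBC (A : Type*) [CommRing A] (M : Type*) [AddCommGroup M] [Module A M]
    (d : ℕ) (B : Type*) [CommRing B] [Algebra A B] :
    TensorPow B (B ⊗[A] M) (d + 1) ≃ₗ[B] TensorPow B (B ⊗[A] M) d ⊗[A] M :=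
  tensorPowSucc B (B ⊗[A] M) d ≪≫ₗ AlgebraTensorModule.cancelBaseChange A B B _ M

lemma tensorPowSuccBC_map (φ : M →ₗ[A] M') (y : TensorPow B (B ⊗[A] M) (d + 1)) :
    tensorPowSuccBC A M' d B (tensorPowMap (d + 1) B φ y) =
      TensorProduct.map ((tensorPowMap d B φ).restrictScalars A) φ (tensorPowSuccBC A M d B y) := by
  induction y using PiTensorProduct.induction_on with
  | smul_tprod r v =>
    simp only [map_smul, tensorPowMap_tprod, tensorPowSuccBC, LinearEquiv.trans_apply,
      tensorPowSucc_tprod]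
    have key : ∀ (t : TensorPow B (B ⊗[A] M) d) (w : B ⊗[A] M),
        AlgebraTensorModule.cancelBaseChange A B B _ M'
          (tensorPowMap d B φ t ⊗ₜ[B] φ.baseChange B w) =
        TensorProduct.map ((tensorPowMap d B φ).restrictScalars A) φ
          (AlgebraTensorModule.cancelBaseChange A B B _ M (t ⊗ₜ[B] w)) := by
      intro t w
      induction w using TensorProduct.induction_on with
      | zero => simp
      | tmul b m => simp
      | add x y hx hy => simp only [map_add, tmul_add, hx, hy]
    have h2 : ∀ z : TensorPow B (B ⊗[A] M) d ⊗[A] M,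
        TensorProduct.map ((tensorPowMap d B φ).restrictScalars A) φ (r • z) =
        r • TensorProduct.map ((tensorPowMap d B φ).restrictScalars A) φ z := by
      intro z
      induction z using TensorProduct.induction_on with
      | zero => simp
      | tmul b m => simp [smul_tmul']
      | add x y hx hy => simp only [map_add, smul_add, hx, hy]
    rw [h2, ← key, tensorPowMap_tprod]
  | add x y hx hy => simp only [map_add, hx, hy]

end

/-- The equational criterion for flatness, with coefficients in an arbitrary module `Q`. -/
lemma vanishesTrivially_of_flat {A : Type*} [CommRing A] {M Q : Type*} [AddCommGroup M]
    [Module A M] [Module.Flat A M] [AddCommGroup Q] [Module A Q] {ι : Type*} [Fintype ι]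
    (q : ι → Q) (m : ι → M) (h : ∑ i, q i ⊗ₜ[A] m i = 0) : VanishesTrivially A q m :=
  vanishesTrivially_of_sum_tmul_eq_zero_of_rTensor_injective A
    (Module.Flat.rTensor_preserves_injective_linearMap _ (Submodule.injective_subtype _)) h

/-- If a single tensor killed by `φ : K → M` can always be killed at a finite free stage through
which `φ` factors, the same holds for finitely many tensors at once. -/
lemma factor_family {A : Type u} [CommRing A] {M : Type u} [AddCommGroup M] [Module A M]
    (d : ℕ) (B : Type*) [CommRing B] [Algebra A B]
    (H : ∀ (K : Type u) [AddCommGroup K] [Module A K] [Module.Free A K] [Module.Finite A K]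
      (φ : K →ₗ[A] M) (y : TensorPow B (B ⊗[A] K) d), tensorPowMap d B φ y = 0 →
      ∃ (n : ℕ) (u : K →ₗ[A] (Fin n →₀ A)) (ψ : (Fin n →₀ A) →ₗ[A] M),
        φ = ψ ∘ₗ u ∧ tensorPowMap d B u y = 0)
    {ι : Type*} (s : Finset ι)
    (K : Type u) [AddCommGroup K] [Module A K] [Module.Free A K] [Module.Finite A K]
    (φ : K →ₗ[A] M) (y : ι → TensorPow B (B ⊗[A] K) d) (hy : ∀ i ∈ s, tensorPowMap d B φ (y i) = 0) :
    ∃ (n : ℕ) (u : K →ₗ[A] (Fin n →₀ A)) (ψ : (Fin n →₀ A) →ₗ[A] M),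
        φ = ψ ∘ₗ u ∧ ∀ i ∈ s, tensorPowMap d B u (y i) = 0 := by
  classical
  induction s using Finset.induction_on with
  | empty =>
    obtain ⟨n, u, ψ, h, -⟩ := H K φ 0 (map_zero _)
    exact ⟨n, u, ψ, h, by simp⟩
  | insert a s ha ih =>
    obtain ⟨n, u, ψ, rfl, h1⟩ := ih (fun i hi => hy i (Finset.mem_insert_of_mem hi))
    obtain ⟨n', u', ψ', rfl, h2⟩ := H _ ψ (tensorPowMap d B u (y a))
      (by rw [← tensorPowMap_comp]; exact hy a (Finset.mem_insert_self _ _))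
    refine ⟨n', u' ∘ₗ u, ψ', by rw [LinearMap.comp_assoc], fun i hi => ?_⟩
    rw [tensorPowMap_comp]
    rcases Finset.mem_insert.mp hi with rfl | hi
    · exact h2
    · rw [h1 i hi, map_zero]

set_option maxHeartbeats 2000000 in
/-- Let `M` be flat, `K` finite free and `φ : K → M`. A tensor `y ∈ (B ⊗ K)^{⊗ d}` killed by `φ`
is already killed by some `u : K → Aⁿ` through which `φ` factors. This replaces the statement
that tensor powers commute with the filtered colimit of finite free modules presenting `M`.
The proof is by induction on `d`, splitting off the last tensor factor. -/
lemma factor_of_flat {A : Type u} [CommRing A] {M : Type u} [AddCommGroup M] [Module A M]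
    [Module.Flat A M] (d : ℕ) (B : Type*) [CommRing B] [Algebra A B] :
    ∀ (K : Type u) [AddCommGroup K] [Module A K] [Module.Free A K] [Module.Finite A K]
      (φ : K →ₗ[A] M) (y : TensorPow B (B ⊗[A] K) d), tensorPowMap d B φ y = 0 →
      ∃ (n : ℕ) (u : K →ₗ[A] (Fin n →₀ A)) (ψ : (Fin n →₀ A) →ₗ[A] M),
        φ = ψ ∘ₗ u ∧ tensorPowMap d B u y = 0 := by
  induction d with
  | zero =>
    intro K _ _ _ _ φ y hy
    have key : ∀ {M' : Type u} [AddCommGroup M'] [Module A M'] (χ : K →ₗ[A] M')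
        (y : TensorPow B (B ⊗[A] K) 0),
        PiTensorProduct.isEmptyEquiv (Fin 0) (tensorPowMap 0 B χ y) =
          PiTensorProduct.isEmptyEquiv (Fin 0) y := by
      intro M' _ _ χ y
      induction y using PiTensorProduct.induction_on with
      | smul_tprod r v => simp [tensorPowMap_tprod]
      | add x y hx hy => simp only [map_add, hx, hy]
    have hy0 : y = 0 := by
      apply (PiTensorProduct.isEmptyEquiv (R := B) (s := fun _ => B ⊗[A] K) (Fin 0)).injective
      rw [← key φ y, hy]; simp
    let b := Module.Free.chooseBasis A K
    let e := Fintype.equivFin (Module.Free.ChooseBasisIndex A K)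
    let c := b.reindex e
    exact ⟨_, c.repr.toLinearMap, φ ∘ₗ c.repr.symm.toLinearMap, by ext; simp, by simp [hy0]⟩
  | succ d ih =>
    intro K _ _ _ _ φ y hy
    let b := Module.Free.chooseBasis A K
    set y1 := tensorPowSuccBC A K d B y with hy1
    obtain ⟨t, ht⟩ : ∃ t : Module.Free.ChooseBasisIndex A K → TensorPow B (B ⊗[A] K) d,
        y1 = ∑ i, t i ⊗ₜ b i := by
      clear_value y1
      clear hy1
      induction y1 using TensorProduct.induction_on with
      | zero => exact ⟨0, by simp⟩
      | tmul s k =>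
        refine ⟨fun i => b.repr k i • s, ?_⟩
        conv_lhs => rw [← b.sum_repr k, tmul_sum]
        exact Finset.sum_congr rfl fun i _ => by rw [smul_tmul]
      | add x z hx hz =>
        obtain ⟨t, rfl⟩ := hx
        obtain ⟨t', rfl⟩ := hz
        exact ⟨t + t', by simp [add_tmul, Finset.sum_add_distrib]⟩
    have h0 : ∑ i, tensorPowMap d B φ (t i) ⊗ₜ[A] φ (b i) = 0 := by
      have := tensorPowSuccBC_map d B φ y
      rw [hy, map_zero, ← hy1, ht] at this
      simpa using this.symm
    obtain ⟨k, a, v, hv, hav⟩ :=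
      vanishesTrivially_of_flat (fun i => tensorPowMap d B φ (t i)) (fun i => φ (b i)) h0
    -- Factoring through `u` rewrites the last tensor factor in terms of the `v j`; the remaining
    -- coefficients lie in the `d`-th tensor power, where the induction hypothesis applies.
    let u : K →ₗ[A] (Fin k →₀ A) := b.constr A fun i => ∑ j, Finsupp.single j (a i j)
    let ψ : (Fin k →₀ A) →ₗ[A] M := Finsupp.linearCombination A v
    have hφ : φ = ψ ∘ₗ u := b.ext fun i => by
      simp [u, ψ, hv]
    obtain ⟨n, u', ψ', hψ, h2⟩ := factor_family d B ih Finset.univ _ ψ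
      (fun j => tensorPowMap d B u (∑ i, a i j • t i)) (by
        intro j _
        rw [← tensorPowMap_comp, ← hφ, ← hav j]
        simp only [map_sum]
        exact Finset.sum_congr rfl fun i _ => ((tensorPowMap d B φ).restrictScalars A).map_smul _ _)
    refine ⟨n, u' ∘ₗ u, ψ', by rw [hφ, hψ, LinearMap.comp_assoc], ?_⟩
    apply (tensorPowSuccBC A _ d B).injective
    rw [map_zero, tensorPowSuccBC_map, ← hy1, ht]
    set F := (tensorPowMap d B (u' ∘ₗ u)).restrictScalars A with hF
    have hF0 : ∀ j, ∑ i, a i j • F (t i) = 0 := by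
      intro j
      have := h2 j (Finset.mem_univ _)
      rw [← tensorPowMap_comp] at this
      change F _ = 0 at this
      simpa using this
    have hub : ∀ i, u (b i) = ∑ j, a i j • Finsupp.single j 1 := by
      intro i; simp [u]
    simp only [map_sum, map_tmul, LinearMap.comp_apply, hub, tmul_sum, map_smul]
    rw [Finset.sum_comm]
    refine Finset.sum_eq_zero fun j _ => ?_
    simp only [tmul_smul, smul_tmul', ← sum_tmul, hF0, zero_tmul]

end Aux

/-! ### Functoriality and lifting of symmetric tensors -/

section Aux2

open TensorProduct

section

variable {A : Type*} [CommRing A] {M M' M'' : Type*} [AddCommGroup M] [Module A M]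
  [AddCommGroup M'] [Module A M'] [AddCommGroup M''] [Module A M''] (d : ℕ)

/-- The map `TS^d_A(M) → TS^d_A(M')` induced by `φ : M → M'`. -/
noncomputable def symMap (φ : M →ₗ[A] M') : symmetricTensors A M d →ₗ[A] symmetricTensors A M' d :=
  (PiTensorProduct.map fun _ : Fin d => φ).restrict (by
    intro x hx σ
    have := PiTensorProduct.map_reindex (fun _ : Fin d => φ) σ x
    rw [hx σ] at this
    exact this.symm)

lemma coe_symMap (φ : M →ₗ[A] M') (y : symmetricTensors A M d) :
    (symMap d φ y : TensorPow A M' d) = PiTensorProduct.map (fun _ : Fin d => φ) y := rfl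

lemma symMap_comp (ψ : M' →ₗ[A] M'') (φ : M →ₗ[A] M') (y : symmetricTensors A M d) :
    symMap d (ψ ∘ₗ φ) y = symMap d ψ (symMap d φ y) := by
  ext1
  simp only [coe_symMap, PiTensorProduct.map_comp, LinearMap.comp_apply]

variable (B : Type*) [CommRing B] [Algebra A B]

lemma tensorPowCompare_tprod (v : Fin d → M) :
    tensorPowCompare A M d B (PiTensorProduct.tprod A v) =
      PiTensorProduct.tprod B fun i => (1 : B) ⊗ₜ[A] v i := by
  simp [tensorPowCompare]

lemma tensorPowCompare_map (φ : M →ₗ[A] M') (y : TensorPow A M d) :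
    tensorPowCompare A M' d B (PiTensorProduct.map (fun _ => φ) y) =
      tensorPowMap d B φ (tensorPowCompare A M d B y) := by
  have : tensorPowCompare A M' d B ∘ₗ PiTensorProduct.map (fun _ => φ) =
      (tensorPowMap d B φ).restrictScalars A ∘ₗ tensorPowCompare A M d B := by
    ext v
    simp [tensorPowCompare_tprod, tensorPowMap_tprod]
  exact LinearMap.congr_fun this y

lemma symmetricTensorsBaseChange_tmul (b : B) (y : symmetricTensors A M d) :
    symmetricTensorsBaseChange A M d B (b ⊗ₜ y) = b • tensorPowCompare A M d B y := by
  simp [symmetricTensorsBaseChange]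

lemma symmetricTensorsBaseChange_map (φ : M →ₗ[A] M') (x : B ⊗[A] symmetricTensors A M d) :
    symmetricTensorsBaseChange A M' d B ((symMap d φ).baseChange B x) =
      tensorPowMap d B φ (symmetricTensorsBaseChange A M d B x) := by
  induction x using TensorProduct.induction_on with
  | zero => simp
  | tmul b y =>
    simp only [LinearMap.baseChange_tmul, symmetricTensorsBaseChange_tmul, coe_symMap,
      tensorPowCompare_map, map_smul]
  | add x y hx hy => simp only [map_add, hx, hy]

lemma tensorPowCompare_self_injective : Function.Injective (tensorPowCompare A M d A) := by
  apply Function.LeftInverse.injective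
    (g := PiTensorProduct.map fun _ : Fin d => (TensorProduct.lid A M).toLinearMap)
  intro y
  induction y using PiTensorProduct.induction_on with
  | smul_tprod r v => simp [tensorPowCompare_tprod]
  | add x y hx hy => simp only [map_add, hx, hy]

end

section

variable {A : Type u} [CommRing A] {M : Type u} [AddCommGroup M] [Module A M] (d : ℕ)

/-- The case `B = A` of the factorization property, for finitely many tensors. -/
lemma factor_tensorPow [Module.Flat A M] {ι : Type*} (s : Finset ι)
    (K : Type u) [AddCommGroup K] [Module A K] [Module.Free A K] [Module.Finite A K]
    (φ : K →ₗ[A] M) (y : ι → TensorPow A K d)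
    (hy : ∀ i ∈ s, PiTensorProduct.map (fun _ => φ) (y i) = 0) :
    ∃ (n : ℕ) (u : K →ₗ[A] (Fin n →₀ A)) (ψ : (Fin n →₀ A) →ₗ[A] M),
        φ = ψ ∘ₗ u ∧ ∀ i ∈ s, PiTensorProduct.map (fun _ => u) (y i) = 0 := by
  obtain ⟨n, u, ψ, h, h2⟩ := factor_family d A (factor_of_flat (M := M) d A) s K φ
    (fun i => tensorPowCompare A K d A (y i))
    (fun i hi => by rw [← tensorPowCompare_map, hy i hi, map_zero])
  refine ⟨n, u, ψ, h, fun i hi => tensorPowCompare_self_injective d ?_⟩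
  rw [tensorPowCompare_map, h2 i hi, map_zero]

lemma exists_lift_tensorPow (t : TensorPow A M d) :
    ∃ (K : Type u) (_ : AddCommGroup K) (_ : Module A K) (_ : Module.Free A K)
      (_ : Module.Finite A K) (φ : K →ₗ[A] M) (y : TensorPow A K d),
      PiTensorProduct.map (fun _ => φ) y = t := by
  induction t using PiTensorProduct.induction_on with
  | smul_tprod r v =>
    refine ⟨Fin d →₀ A, inferInstance, inferInstance, inferInstance, inferInstance,
      Finsupp.linearCombination A v,
      r • PiTensorProduct.tprod A fun i => Finsupp.single i 1, ?_⟩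
    simp
  | add x y hx hy =>
    obtain ⟨K, _, _, _, _, φ, x', rfl⟩ := hx
    obtain ⟨K', _, _, _, _, φ', y', rfl⟩ := hy
    refine ⟨K × K', inferInstance, inferInstance, inferInstance, inferInstance,
      φ.coprod φ', PiTensorProduct.map (fun _ => LinearMap.inl A K K') x' +
        PiTensorProduct.map (fun _ => LinearMap.inr A K K') y', ?_⟩
    rw [map_add, ← LinearMap.comp_apply, ← LinearMap.comp_apply, ← PiTensorProduct.map_comp,
      ← PiTensorProduct.map_comp, LinearMap.coprod_inl, LinearMap.coprod_inr]

/-- Every symmetric tensor over a flat module comes from a symmetric tensor over a finite free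
module: a tensor lifting `t` becomes symmetric at a later stage. -/
lemma exists_lift_sym [Module.Flat A M] (t : symmetricTensors A M d) :
    ∃ (K : Type u) (_ : AddCommGroup K) (_ : Module A K) (_ : Module.Free A K)
      (_ : Module.Finite A K) (φ : K →ₗ[A] M) (y : symmetricTensors A K d),
      symMap d φ y = t := by
  obtain ⟨K, _, _, _, _, φ, y, hy⟩ := exists_lift_tensorPow d (t : TensorPow A M d)
  obtain ⟨n, u, ψ, rfl, h⟩ := factor_tensorPow d Finset.univ K φ
    (fun σ : Equiv.Perm (Fin d) => PiTensorProduct.reindex A (fun _ => K) σ y - y) (by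
      intro σ _
      have := PiTensorProduct.map_reindex (fun _ : Fin d => φ) σ y
      rw [map_sub, this, hy, sub_eq_zero]
      exact t.2 σ)
  refine ⟨Fin n →₀ A, inferInstance, inferInstance, inferInstance, inferInstance, ψ,
    ⟨PiTensorProduct.map (fun _ => u) y, fun σ => ?_⟩, ?_⟩
  · have h1 := h σ (Finset.mem_univ _)
    have := PiTensorProduct.map_reindex (fun _ : Fin d => u) σ y
    rw [map_sub, this, sub_eq_zero] at h1
    exact h1
  · ext1
    rw [coe_symMap, ← hy, PiTensorProduct.map_comp, LinearMap.comp_apply]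

lemma exists_lift_baseChange [Module.Flat A M] (B : Type*) [CommRing B] [Algebra A B]
    (x : B ⊗[A] symmetricTensors A M d) (m : B ⊗[A] M) :
    ∃ (K : Type u) (_ : AddCommGroup K) (_ : Module A K) (_ : Module.Free A K)
      (_ : Module.Finite A K) (φ : K →ₗ[A] M) (x' : B ⊗[A] symmetricTensors A K d)
      (m' : B ⊗[A] K), (symMap d φ).baseChange B x' = x ∧ φ.baseChange B m' = m := by
  have comp1 : ∀ {K K' : Type u} [AddCommGroup K] [Module A K] [AddCommGroup K'] [Module A K']
      (ψ : K' →ₗ[A] M) (u : K →ₗ[A] K') (x' : B ⊗[A] symmetricTensors A K d),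
      (symMap d ψ).baseChange B ((symMap d u).baseChange B x') =
        (symMap d (ψ ∘ₗ u)).baseChange B x' := by
    intro K K' _ _ _ _ ψ u x'
    rw [← LinearMap.comp_apply, ← LinearMap.baseChange_comp]
    congr 2
    ext1 z
    exact (symMap_comp d ψ u z).symm
  have comp2 : ∀ {K K' : Type u} [AddCommGroup K] [Module A K] [AddCommGroup K'] [Module A K']
      (ψ : K' →ₗ[A] M) (u : K →ₗ[A] K') (x' : B ⊗[A] K),
      ψ.baseChange B (u.baseChange B x') = (ψ ∘ₗ u).baseChange B x' := by
    intro K K' _ _ _ _ ψ u x'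
    rw [LinearMap.baseChange_comp, LinearMap.comp_apply]
  have hx : ∃ (K : Type u) (_ : AddCommGroup K) (_ : Module A K) (_ : Module.Free A K)
      (_ : Module.Finite A K) (φ : K →ₗ[A] M) (x' : B ⊗[A] symmetricTensors A K d),
      (symMap d φ).baseChange B x' = x := by
    induction x using TensorProduct.induction_on with
    | zero =>
      exact ⟨Fin 0 →₀ A, inferInstance, inferInstance, inferInstance, inferInstance, 0, 0, map_zero _⟩
    | tmul b t =>
      obtain ⟨K, _, _, _, _, φ, y, rfl⟩ := exists_lift_sym d t
      exact ⟨K, ‹_›, ‹_›, ‹_›, ‹_›, φ, b ⊗ₜ y, by simp⟩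
    | add x y hx hy =>
      obtain ⟨K, _, _, _, _, φ, x', rfl⟩ := hx
      obtain ⟨K', _, _, _, _, φ', y', rfl⟩ := hy
      refine ⟨K × K', inferInstance, inferInstance, inferInstance, inferInstance,
        φ.coprod φ', (symMap d (LinearMap.inl A K K')).baseChange B x' +
          (symMap d (LinearMap.inr A K K')).baseChange B y', ?_⟩
      rw [map_add, comp1, comp1, LinearMap.coprod_inl, LinearMap.coprod_inr]
  have hm : ∃ (K : Type u) (_ : AddCommGroup K) (_ : Module A K) (_ : Module.Free A K)
      (_ : Module.Finite A K) (φ : K →ₗ[A] M) (m' : B ⊗[A] K), φ.baseChange B m' = m := by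
    induction m using TensorProduct.induction_on with
    | zero =>
      exact ⟨Fin 0 →₀ A, inferInstance, inferInstance, inferInstance, inferInstance, 0, 0, map_zero _⟩
    | tmul b t =>
      exact ⟨A, inferInstance, inferInstance, inferInstance, inferInstance,
        LinearMap.toSpanSingleton A M t, b ⊗ₜ 1, by simp⟩
    | add x y hx hy =>
      obtain ⟨K, _, _, _, _, φ, x', rfl⟩ := hx
      obtain ⟨K', _, _, _, _, φ', y', rfl⟩ := hy
      refine ⟨K × K', inferInstance, inferInstance, inferInstance, inferInstance,
        φ.coprod φ', (LinearMap.inl A K K').baseChange B x' +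
          (LinearMap.inr A K K').baseChange B y', ?_⟩
      rw [map_add, comp2, comp2, LinearMap.coprod_inl, LinearMap.coprod_inr]
  obtain ⟨K, _, _, _, _, φ, x', rfl⟩ := hx
  obtain ⟨K', _, _, _, _, φ', m', rfl⟩ := hm
  refine ⟨K × K', inferInstance, inferInstance, inferInstance, inferInstance,
    φ.coprod φ', (symMap d (LinearMap.inl A K K')).baseChange B x',
      (LinearMap.inr A K K').baseChange B m', ?_, ?_⟩
  · rw [comp1, LinearMap.coprod_inl]
  · rw [comp2, LinearMap.coprod_inr]

end

end Aux2

/-! ### Laws on finite free modules -/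

section Aux3

open TensorProduct

section Words

variable {ι : Type*} {d : ℕ}

/-- The content of a word `w` of length `d` in the alphabet `ι`: the exponent of the monomial
`X_{w 0} ⋯ X_{w (d-1)}`. -/
noncomputable def wordContent (w : Fin d → ι) : ι →₀ ℕ := ∑ i, Finsupp.single (w i) 1

lemma wordContent_comp (w : Fin d → ι) (σ : Equiv.Perm (Fin d)) :
    wordContent (fun i => w (σ i)) = wordContent w :=
  Equiv.sum_comp σ fun i => Finsupp.single (w i) 1

lemma wordContent_apply [DecidableEq ι] (w : Fin d → ι) (a : ι) :
    wordContent w a = Fintype.card {i // w i = a} := by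
  simp [wordContent, Finsupp.finsetSum_apply, Finsupp.single_apply, Fintype.card_subtype]

lemma exists_perm_of_wordContent_eq {w w' : Fin d → ι} (h : wordContent w = wordContent w') :
    ∃ σ : Equiv.Perm (Fin d), w' = fun i => w (σ i) := by
  classical
  have e : ∀ a, Nonempty ({i // w' i = a} ≃ {i // w i = a}) := fun a =>
    Fintype.card_eq.mp (by simpa only [wordContent_apply] using (DFunLike.congr_fun h a).symm)
  replace e := fun a => (e a).some
  refine ⟨(Equiv.sigmaFiberEquiv w').symm.trans
    ((Equiv.sigmaCongrRight e).trans (Equiv.sigmaFiberEquiv w)), ?_⟩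
  funext i
  exact ((e (w' i)) ⟨i, rfl⟩).2.symm

lemma exists_wordContent_eq (β : ι →₀ ℕ) (h : β.degree = d) :
    ∃ w : Fin d → ι, wordContent w = β := by
  classical
  induction d generalizing β with
  | zero =>
    rw [Finsupp.degree_eq_zero_iff] at h
    exact ⟨Fin.elim0, by simp [wordContent, h]⟩
  | succ d ih =>
    have hβ : β ≠ 0 := by
      rintro rfl
      simp at h
    obtain ⟨a, ha⟩ := Finsupp.ne_iff.mp hβ
    have hle : Finsupp.single a 1 ≤ β := by
      rw [Finsupp.single_le_iff]
      exact Nat.one_le_iff_ne_zero.mpr ha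
    obtain ⟨γ, rfl⟩ := exists_add_of_le hle
    obtain ⟨w, hw⟩ := ih γ (by rw [map_add, Finsupp.degree_single] at h; omega)
    refine ⟨Fin.cons a w, ?_⟩
    simp [wordContent, Fin.sum_univ_succ, ← hw]

lemma prod_pow_wordContent {B : Type*} [CommRing B] (c : ι → B) (w : Fin d → ι) :
    ((wordContent w).prod fun i k => c i ^ k) = ∏ i, c (w i) := by
  classical
  rw [wordContent, ← Finsupp.prod_finsetSum_index (by simp) (by simp [pow_add])]
  simp

end Words

section Free

variable {A : Type u} [CommRing A] {K : Type u} [AddCommGroup K] [Module A K]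
  {N : Type u} [AddCommGroup N] [Module A N] {ι : Type u} (b : Module.Basis ι A K) (d : ℕ)

lemma repr_reindex (σ : Equiv.Perm (Fin d)) (t : TensorPow A K d) (w : Fin d → ι) :
    (Basis.piTensorProduct fun _ : Fin d => b).repr
      (PiTensorProduct.reindex A (fun _ => K) σ t) w =
    (Basis.piTensorProduct fun _ : Fin d => b).repr t fun i => w (σ i) := by
  induction t using PiTensorProduct.induction_on with
  | smul_tprod r v =>
    have := PiTensorProduct.reindex_tprod (R := A) σ v
    rw [map_smul, this]
    simp only [map_smul, Finsupp.smul_apply, Basis.piTensorProduct_repr_tprod_apply]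
    congr 1
    exact (Fintype.prod_equiv σ _ _ (by simp)).symm
  | add x y hx hy => simp only [map_add, Finsupp.add_apply, hx, hy]

/-- The `w`-th coordinate of a symmetric tensor. -/
noncomputable def symCoord (w : Fin d → ι) : symmetricTensors A K d →ₗ[A] A :=
  (Basis.piTensorProduct fun _ : Fin d => b).coord w ∘ₗ (symmetricTensors A K d).subtype

lemma symCoord_eq {w w' : Fin d → ι} (h : wordContent w = wordContent w') :
    symCoord b d w = symCoord b d w' := by
  obtain ⟨σ, rfl⟩ := exists_perm_of_wordContent_eq h
  ext t
  have := repr_reindex b d σ (t : TensorPow A K d) w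
  rw [t.2 σ] at this
  exact this

/-- The coordinates of the image of `x` in `(B ⊗ K)^{⊗ d}` are the base-changed coordinates of
`x`. -/
lemma repr_symmetricTensorsBaseChange (B : Type*) [CommRing B] [Algebra A B]
    (x : B ⊗[A] symmetricTensors A K d) (w : Fin d → ι) :
    (Basis.piTensorProduct fun _ : Fin d => b.baseChange B).repr
      (symmetricTensorsBaseChange A K d B x) w =
    LinearMap.liftBaseChange B (Algebra.linearMap A B ∘ₗ symCoord b d w) x := by
  induction x using TensorProduct.induction_on with
  | zero => simp
  | add x y hx hy => simp only [map_add, Finsupp.add_apply, hx, hy]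
  | tmul c t =>
    rw [symmetricTensorsBaseChange_tmul]
    simp only [map_smul, Finsupp.smul_apply, LinearMap.liftBaseChange_tmul, LinearMap.comp_apply,
      symCoord, Submodule.subtype_apply, Module.Basis.coord_apply, Algebra.linearMap_apply]
    congr 1
    generalize (t : TensorPow A K d) = t
    induction t using PiTensorProduct.induction_on with
    | smul_tprod r v =>
      rw [map_smul, tensorPowCompare_tprod, algebra_compatible_smul B r]
      simp only [map_smul, Finsupp.smul_apply, Basis.piTensorProduct_repr_tprod_apply,
        Module.Basis.baseChange_repr_tmul, Algebra.smul_def, mul_one, map_mul,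
        map_prod, Algebra.algebraMap_self_apply]
    | add x y hx hy => simp only [map_add, Finsupp.add_apply, hx, hy]

/-- The family of maps `f` is represented by the linear map `ft` on symmetric tensors: the base
change of `ft` to `B` sends any element corresponding to `m^{⊗ d}` to `f_B(m)`. -/
def IsRep {M : Type u} [AddCommGroup M] [Module A M]
    (f : (B : Type u) → [CommRing B] → [Algebra A B] → B ⊗[A] M → B ⊗[A] N)
    (ft : symmetricTensors A M d →ₗ[A] N) : Prop :=
  ∀ (B : Type u) [CommRing B] [Algebra A B] (m : B ⊗[A] M)
    (x : B ⊗[A] (symmetricTensors A M d)),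
      symmetricTensorsBaseChange A M d B x = PiTensorProduct.tprod B (fun _ => m) →
      LinearMap.baseChange B ft x = f B m

/-- The coefficients of an element of `A[X] ⊗ N`. -/
noncomputable def polyCoeff : MvPolynomial ι A ⊗[A] N ≃ₗ[A] (ι →₀ ℕ) →₀ N := by
  classical
  exact TensorProduct.equivFinsuppOfBasisLeft (MvPolynomial.basisMonomials ι A)

lemma polyCoeff_tmul (p : MvPolynomial ι A) (n : N) (β : ι →₀ ℕ) :
    polyCoeff (p ⊗ₜ[A] n) β = p.coeff β • n := by
  classical
  simp only [polyCoeff, TensorProduct.equivFinsuppOfBasisLeft_apply_tmul_apply]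
  rfl

lemma eq_sum_polyCoeff (z : MvPolynomial ι A ⊗[A] N) :
    z = ∑ β ∈ (polyCoeff z).support, MvPolynomial.monomial β 1 ⊗ₜ[A] polyCoeff z β := by
  classical
  conv_lhs => rw [← (polyCoeff (ι := ι) (N := N) (A := A)).symm_apply_apply z]
  simp only [polyCoeff, TensorProduct.equivFinsuppOfBasisLeft_symm_apply,
    MvPolynomial.coe_basisMonomials, Finsupp.sum]

variable [Fintype ι]

/-- The generic element `∑ X_i ⊗ b_i` of `A[X] ⊗ K`. -/
noncomputable def genericElt : MvPolynomial ι A ⊗[A] K := ∑ i, MvPolynomial.X i ⊗ₜ b i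

lemma rTensor_genericElt (B : Type*) [CommRing B] [Algebra A B] (g : MvPolynomial ι A →ₐ[A] B) :
    LinearMap.rTensor K g.toLinearMap (genericElt b) = ∑ i, g (MvPolynomial.X i) ⊗ₜ b i := by
  simp [genericElt]

/-- Every element of `B ⊗ K` is a specialization of the generic element. -/
lemma eval_genericElt (B : Type*) [CommRing B] [Algebra A B] (m : B ⊗[A] K) :
    LinearMap.rTensor K (MvPolynomial.aeval (R := A)
      fun i => (b.baseChange B).repr m i).toLinearMap (genericElt b) = m := by
  rw [rTensor_genericElt]
  conv_rhs => rw [← (b.baseChange B).sum_repr m]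
  simp [Module.Basis.baseChange_apply, TensorProduct.smul_tmul']

/-- Homogeneity of a law in degree `d` forces its value at the generic element to be homogeneous
of degree `d`, as seen by substituting `T X_i` for `X_i`. -/
lemma polyCoeff_eq_zero
    (f : (B : Type u) → [CommRing B] → [Algebra A B] → B ⊗[A] K → B ⊗[A] N)
    (hnat : ∀ (B B' : Type u) [CommRing B] [Algebra A B] [CommRing B'] [Algebra A B']
      (g : B →ₐ[A] B') (m : B ⊗[A] K),
        f B' (LinearMap.rTensor K g.toLinearMap m) = LinearMap.rTensor N g.toLinearMap (f B m))
    (hhom : ∀ (B : Type u) [CommRing B] [Algebra A B] (c : B) (m : B ⊗[A] K),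
        f B (c • m) = c ^ d • f B m) (γ : ι →₀ ℕ) (hγ : γ.degree ≠ d) :
    polyCoeff (f _ (genericElt b)) γ = 0 := by
  classical
  set z := f _ (genericElt b) with hz
  let g₁ : MvPolynomial ι A →ₐ[A] Polynomial (MvPolynomial ι A) :=
    (Polynomial.CAlgHom (R := MvPolynomial ι A) (A := MvPolynomial ι A)).restrictScalars A
  let g₂ : MvPolynomial ι A →ₐ[A] Polynomial (MvPolynomial ι A) := MvPolynomial.aeval fun i =>
    Polynomial.X * Polynomial.C (MvPolynomial.X i)
  have h1 : LinearMap.rTensor K g₂.toLinearMap (genericElt b) =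
      (Polynomial.X : Polynomial (MvPolynomial ι A)) • LinearMap.rTensor K g₁.toLinearMap (genericElt b) := by
    rw [rTensor_genericElt, rTensor_genericElt, Finset.smul_sum]
    simp [g₁, g₂, TensorProduct.smul_tmul', -Polynomial.X_mul_C]
  have h2 : LinearMap.rTensor N g₂.toLinearMap z =
      (Polynomial.X : Polynomial (MvPolynomial ι A)) ^ d • LinearMap.rTensor N g₁.toLinearMap z := by
    rw [hz, ← hnat, ← hnat, h1, hhom]
  have hg₂ : ∀ β : ι →₀ ℕ, g₂ (MvPolynomial.monomial β 1) =
      Polynomial.X ^ β.degree * Polynomial.C (MvPolynomial.monomial β 1) := by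
    intro β
    simp only [g₂, MvPolynomial.aeval_monomial, mul_pow, map_one, one_mul]
    rw [Finsupp.prod_mul, MvPolynomial.monomial_eq, Finsupp.prod, Finset.prod_pow_eq_pow_sum,
      Finsupp.prod, Finsupp.prod, map_one, one_mul, map_prod]
    simp only [map_pow]
    rfl
  let L : Polynomial (MvPolynomial ι A) →ₗ[A] A := MvPolynomial.lcoeff A γ ∘ₗ
    (Polynomial.lcoeff (MvPolynomial ι A) γ.degree).restrictScalars A
  have hL : ∀ p, L p = (p.coeff γ.degree).coeff γ := fun _ => rfl
  have h3 := congrArg (fun y => TensorProduct.lid A N (LinearMap.rTensor N L y)) h2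
  rw [eq_sum_polyCoeff z] at h3
  simp only [map_sum, LinearMap.rTensor_tmul, AlgHom.toLinearMap_apply, hg₂, Finset.smul_sum,
    TensorProduct.smul_tmul', TensorProduct.lid_tmul] at h3
  have e1 : ∀ β : ι →₀ ℕ, L (Polynomial.X ^ β.degree * Polynomial.C (MvPolynomial.monomial β 1)) =
      if β = γ then 1 else 0 := by
    intro β
    by_cases h : β = γ
    · subst h
      simp [hL]
    · simp only [hL, Polynomial.coeff_X_pow_mul', Polynomial.coeff_C, if_neg h]
      split_ifs <;> simp [h]
  have e2 : ∀ β : ι →₀ ℕ, L ((Polynomial.X : Polynomial (MvPolynomial ι A)) ^ d • g₁ (MvPolynomial.monomial β 1)) = 0 := by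
    intro β
    have : g₁ (MvPolynomial.monomial β 1) = Polynomial.C (MvPolynomial.monomial β 1) := rfl
    simp only [hL, this, smul_eq_mul, Polynomial.coeff_X_pow_mul', Polynomial.coeff_C]
    split_ifs with h h'
    · omega
    · simp
    · simp
  simp only [e1, e2, zero_smul, Finset.sum_const_zero, ite_smul, one_smul,
    Finset.sum_ite_eq'] at h3
  split_ifs at h3 with h
  · exact h3
  · exact Finsupp.notMem_support_iff.mp h

/-- The value of a homogeneous law of degree `d` in terms of its coefficients, which are indexed
by the contents of words of length `d`. -/
lemma law_eq_sum [DecidableEq ι]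
    (f : (B : Type u) → [CommRing B] → [Algebra A B] → B ⊗[A] K → B ⊗[A] N)
    (hnat : ∀ (B B' : Type u) [CommRing B] [Algebra A B] [CommRing B'] [Algebra A B']
      (g : B →ₐ[A] B') (m : B ⊗[A] K),
        f B' (LinearMap.rTensor K g.toLinearMap m) = LinearMap.rTensor N g.toLinearMap (f B m))
    (hhom : ∀ (B : Type u) [CommRing B] [Algebra A B] (c : B) (m : B ⊗[A] K),
        f B (c • m) = c ^ d • f B m) (B : Type u) [CommRing B] [Algebra A B] (m : B ⊗[A] K) :
    f B m = ∑ α ∈ (Finset.univ : Finset (Fin d → ι)).image wordContent,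
      (α.prod fun i k => (b.baseChange B).repr m i ^ k) ⊗ₜ
        polyCoeff (f (MvPolynomial ι A) (genericElt b)) α := by
  conv_lhs => rw [← eval_genericElt b B m, hnat, eq_sum_polyCoeff (f _ (genericElt b))]
  simp only [map_sum, LinearMap.rTensor_tmul, AlgHom.toLinearMap_apply,
    MvPolynomial.aeval_monomial, map_one, one_mul]
  refine Finset.sum_subset ?_ ?_
  · intro α hα
    obtain ⟨w, hw⟩ := exists_wordContent_eq (d := d) α (by
      by_contra h
      exact Finsupp.mem_support_iff.mp hα (polyCoeff_eq_zero b d f hnat hhom α h))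
    exact Finset.mem_image.mpr ⟨w, Finset.mem_univ _, hw⟩
  · intro α _ hα
    rw [Finsupp.notMem_support_iff.mp hα, tmul_zero]

/-- The coordinates of symmetric tensors depend only on contents of words. Nothing is
required of `q α` when `α` is not the content of a word of length `d`. -/
lemma exists_contentCoord :
    ∃ q : (ι →₀ ℕ) → (symmetricTensors A K d →ₗ[A] A),
      ∀ w : Fin d → ι, q (wordContent w) = symCoord b d w := by
  classical
  refine ⟨fun α => if h : ∃ w : Fin d → ι, wordContent w = α then symCoord b d h.choose else 0,
    fun w => ?_⟩
  have h : ∃ w' : Fin d → ι, wordContent w' = wordContent w := ⟨w, rfl⟩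
  refine (dif_pos h).trans ?_
  exact symCoord_eq b d h.choose_spec

lemma exists_isRep_of_free [Module.Free A K] [Module.Finite A K]
    (f : (B : Type u) → [CommRing B] → [Algebra A B] → B ⊗[A] K → B ⊗[A] N)
    (hnat : ∀ (B B' : Type u) [CommRing B] [Algebra A B] [CommRing B'] [Algebra A B']
      (g : B →ₐ[A] B') (m : B ⊗[A] K),
        f B' (LinearMap.rTensor K g.toLinearMap m) = LinearMap.rTensor N g.toLinearMap (f B m))
    (hhom : ∀ (B : Type u) [CommRing B] [Algebra A B] (c : B) (m : B ⊗[A] K),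
        f B (c • m) = c ^ d • f B m) :
    ∃ ft : symmetricTensors A K d →ₗ[A] N, IsRep d f ft := by
  classical
  let b := Module.Free.chooseBasis A K
  obtain ⟨q, hq⟩ := exists_contentCoord b d
  let n := polyCoeff (f _ (genericElt b))
  let C := (Finset.univ : Finset (Fin d → Module.Free.ChooseBasisIndex A K)).image wordContent
  refine ⟨∑ α ∈ C, (q α).smulRight (n α), fun B _ _ m x hx => ?_⟩
  have key : ∀ x : B ⊗[A] symmetricTensors A K d,
      LinearMap.baseChange B (∑ α ∈ C, (q α).smulRight (n α)) x =
        ∑ α ∈ C, LinearMap.liftBaseChange B (Algebra.linearMap A B ∘ₗ q α) x ⊗ₜ n α := by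
    intro x
    induction x using TensorProduct.induction_on with
    | zero => simp
    | add x y hx hy => simp only [map_add, hx, hy, add_tmul, Finset.sum_add_distrib]
    | tmul c t =>
      simp only [LinearMap.baseChange_tmul, LinearMap.sum_apply, LinearMap.smulRight_apply,
        tmul_sum, LinearMap.liftBaseChange_tmul, LinearMap.comp_apply, Algebra.linearMap_apply]
      refine Finset.sum_congr rfl fun α _ => ?_
      rw [← TensorProduct.smul_tmul, Algebra.smul_def, smul_eq_mul, mul_comm]
  rw [key, law_eq_sum b d f hnat hhom B m]
  refine Finset.sum_congr rfl fun α hα => ?_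
  obtain ⟨w, _, rfl⟩ := Finset.mem_image.mp hα
  congr 1
  rw [hq, ← repr_symmetricTensorsBaseChange b d B x w, hx,
    Basis.piTensorProduct_repr_tprod_apply, prod_pow_wordContent]

/-- The sum of the basis tensors indexed by the words of content `α`. -/
noncomputable def contentSum [DecidableEq ι] (α : ι →₀ ℕ) : symmetricTensors A K d :=
  ⟨∑ w : Fin d → ι, if wordContent w = α then PiTensorProduct.tprod A (fun i => b (w i)) else 0, by
    intro σ
    rw [map_sum]
    refine Fintype.sum_equiv (Equiv.arrowCongr σ (Equiv.refl ι)) _ _ fun w => ?_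
    have h1 : wordContent (Equiv.arrowCongr σ (Equiv.refl ι) w) = wordContent w :=
      wordContent_comp w σ.symm
    have h2 := PiTensorProduct.reindex_tprod (R := A) σ fun i => b (w i)
    rw [h1]
    split_ifs
    · exact h2
    · exact map_zero _⟩

/-- The sums over words of fixed content span the symmetric tensors. -/
lemma eq_sum_contentSum [DecidableEq ι] (q : (ι →₀ ℕ) → (symmetricTensors A K d →ₗ[A] A))
    (hq : ∀ w : Fin d → ι, q (wordContent w) = symCoord b d w) (t : symmetricTensors A K d) :
    t = ∑ α ∈ (Finset.univ : Finset (Fin d → ι)).image wordContent, q α t • contentSum b d α := by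
  ext1
  apply (Basis.piTensorProduct fun _ : Fin d => b).repr.injective
  ext w
  have h : ∀ w' : Fin d → ι, (PiTensorProduct.tprod A fun i => b (w' i)) =
      Basis.piTensorProduct (fun _ : Fin d => b) w' := fun w' =>
    (Basis.piTensorProduct_apply _ _).symm
  have h2 : ∀ α, (Basis.piTensorProduct fun _ : Fin d => b).repr
      (contentSum b d α : TensorPow A K d) w = if wordContent w = α then 1 else 0 := by
    intro α
    simp only [contentSum, h, map_sum, Finsupp.finsetSum_apply, apply_ite, map_zero,
      Module.Basis.repr_self]
    rw [Finset.sum_eq_single w]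
    · split_ifs <;> simp
    · intro w' _ hw'
      split_ifs <;> simp [hw']
    · simp
  have h3 : symCoord b d w t =
    (Basis.piTensorProduct fun _ : Fin d => b).repr (t : TensorPow A K d) w := rfl
  simp only [Submodule.coe_sum, Submodule.coe_smul, map_sum, map_smul, Finsupp.finsetSum_apply,
    Finsupp.smul_apply, h2, smul_eq_mul, mul_ite, mul_one, mul_zero, Finset.sum_ite_eq]
  rw [if_pos (Finset.mem_image_of_mem _ (Finset.mem_univ _)), hq, h3]

/-- The `d`-th tensor power of the generic element is the generating series of the sums over
words of fixed content. -/
lemma symmetricTensorsBaseChange_generic [DecidableEq ι] :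
    symmetricTensorsBaseChange A K d (MvPolynomial ι A)
      (∑ α ∈ (Finset.univ : Finset (Fin d → ι)).image wordContent,
        MvPolynomial.monomial α 1 ⊗ₜ contentSum b d α) =
      PiTensorProduct.tprod (MvPolynomial ι A) fun _ => genericElt b := by
  have hg : genericElt b = ∑ i, (MvPolynomial.X i : MvPolynomial ι A) •
      ((1 : MvPolynomial ι A) ⊗ₜ[A] b i) := by
    simp [genericElt, TensorProduct.smul_tmul']
  rw [hg, MultilinearMap.map_sum]
  simp only [MultilinearMap.map_smul_univ, map_sum, symmetricTensorsBaseChange_tmul, contentSum,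
    apply_ite (tensorPowCompare A K d (MvPolynomial ι A)), tensorPowCompare_tprod, map_zero,
    Finset.smul_sum, smul_ite, smul_zero]
  rw [Finset.sum_comm]
  refine Finset.sum_congr rfl fun w _ => ?_
  rw [Finset.sum_ite_eq, if_pos (Finset.mem_image_of_mem _ (Finset.mem_univ _)),
    ← prod_pow_wordContent, MvPolynomial.monomial_eq, map_one, one_mul]

lemma isRep_unique_of_free [Module.Free A K] [Module.Finite A K]
    (f : (B : Type u) → [CommRing B] → [Algebra A B] → B ⊗[A] K → B ⊗[A] N)
    (g g' : symmetricTensors A K d →ₗ[A] N) (hg : IsRep d f g) (hg' : IsRep d f g') :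
    g = g' := by
  classical
  let b := Module.Free.chooseBasis A K
  obtain ⟨q, hq⟩ := exists_contentCoord b d
  have h := (hg _ _ _ (symmetricTensorsBaseChange_generic b d)).trans
    (hg' _ _ _ (symmetricTensorsBaseChange_generic b d)).symm
  ext t
  rw [eq_sum_contentSum b d q hq t, map_sum, map_sum]
  refine Finset.sum_congr rfl fun α hα => ?_
  rw [map_smul, map_smul]
  congr 1
  have h2 := congrArg (fun z => polyCoeff z α) h
  simpa [polyCoeff_tmul, Finsupp.finsetSum_apply, MvPolynomial.coeff_monomial, ite_smul,
    Finset.sum_ite_eq', hα, -Finset.mem_image] using h2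

end Free

end Aux3

/-! ### From finite free to flat modules -/

section Aux4

open TensorProduct

variable {A : Type u} [CommRing A] {M : Type u} [AddCommGroup M] [Module A M]
  {N : Type u} [AddCommGroup N] [Module A N] (d : ℕ)
  {K : Type u} [AddCommGroup K] [Module A K] {K' : Type u} [AddCommGroup K'] [Module A K']

/-- The pullback of a law `f` on `M` along a linear map `φ : K → M`. -/
noncomputable def pullLaw (f : (B : Type u) → [CommRing B] → [Algebra A B] → B ⊗[A] M → B ⊗[A] N)
    (φ : K →ₗ[A] M) (B : Type u) [CommRing B] [Algebra A B] (m : B ⊗[A] K) : B ⊗[A] N :=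
  f B (φ.baseChange B m)

variable (f : (B : Type u) → [CommRing B] → [Algebra A B] → B ⊗[A] M → B ⊗[A] N)

lemma IsRep.pull {ft : symmetricTensors A M d →ₗ[A] N} (h : IsRep d f ft) (φ : K →ₗ[A] M) :
    IsRep d (pullLaw f φ) (ft ∘ₗ symMap d φ) := by
  intro B _ _ m x hx
  rw [LinearMap.baseChange_comp, LinearMap.comp_apply]
  apply h
  rw [symmetricTensorsBaseChange_map, hx, tensorPowMap_tprod]

lemma pullLaw_comp (ψ : K' →ₗ[A] M) (u : K →ₗ[A] K') :
    pullLaw (K := K) (pullLaw (K := K') f ψ) u = pullLaw f (ψ ∘ₗ u) := by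
  funext B _ _ m
  simp only [pullLaw, LinearMap.baseChange_comp, LinearMap.comp_apply]

lemma exists_isRep_pullLaw [Module.Free A K] [Module.Finite A K]
    (hnat : ∀ (B B' : Type u) [CommRing B] [Algebra A B] [CommRing B'] [Algebra A B']
      (g : B →ₐ[A] B') (m : B ⊗[A] M),
        f B' (LinearMap.rTensor M g.toLinearMap m) = LinearMap.rTensor N g.toLinearMap (f B m))
    (hhom : ∀ (B : Type u) [CommRing B] [Algebra A B] (c : B) (m : B ⊗[A] M),
        f B (c • m) = c ^ d • f B m) (φ : K →ₗ[A] M) :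
    ∃ ft : symmetricTensors A K d →ₗ[A] N, IsRep d (pullLaw f φ) ft := by
  refine exists_isRep_of_free d _ ?_ ?_
  · intro B B' _ _ _ _ g m
    rw [pullLaw, pullLaw, ← hnat]
    congr 1
    induction m using TensorProduct.induction_on with
    | zero => simp
    | tmul c k => simp
    | add x y hx hy => simp only [map_add, hx, hy]
  · intro B _ _ c m
    rw [pullLaw, pullLaw, map_smul, hhom]

/-- The linear maps representing the pullbacks of `f` along two maps from finite free modules
agree on symmetric tensors with the same image in `TS^d(M)`. -/
lemma rep_eq_of_symMap_eq [Module.Flat A M] [Module.Free A K] [Module.Finite A K]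
    [Module.Free A K'] [Module.Finite A K']
    (hex : ∀ (L : Type u) [AddCommGroup L] [Module A L] [Module.Free A L] [Module.Finite A L]
      (φ : L →ₗ[A] M), ∃ ft : symmetricTensors A L d →ₗ[A] N, IsRep d (pullLaw f φ) ft)
    {φ : K →ₗ[A] M} {φ' : K' →ₗ[A] M} {F : symmetricTensors A K d →ₗ[A] N}
    {F' : symmetricTensors A K' d →ₗ[A] N} (hF : IsRep d (pullLaw f φ) F)
    (hF' : IsRep d (pullLaw f φ') F') {y : symmetricTensors A K d} {y' : symmetricTensors A K' d}
    (h : symMap d φ y = symMap d φ' y') : F y = F' y' := by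
  obtain ⟨n, u, ψ, hu, hzu⟩ := factor_tensorPow d {()} (K × K') (φ.coprod φ')
    (fun _ => (symMap d (LinearMap.inl A K K') y : TensorPow A (K × K') d) -
      symMap d (LinearMap.inr A K K') y') (fun _ _ => by
        rw [map_sub, ← coe_symMap, ← coe_symMap, ← symMap_comp, ← symMap_comp,
          LinearMap.coprod_inl, LinearMap.coprod_inr, h, sub_self])
  obtain ⟨G, hG⟩ := hex _ ψ
  have h1 : F = G ∘ₗ symMap d (u ∘ₗ LinearMap.inl A K K') := by
    refine isRep_unique_of_free d _ _ _ hF ?_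
    have := hG.pull d _ (u ∘ₗ LinearMap.inl A K K')
    rwa [pullLaw_comp, ← LinearMap.comp_assoc, ← hu, LinearMap.coprod_inl] at this
  have h2 : F' = G ∘ₗ symMap d (u ∘ₗ LinearMap.inr A K K') := by
    refine isRep_unique_of_free d _ _ _ hF' ?_
    have := hG.pull d _ (u ∘ₗ LinearMap.inr A K K')
    rwa [pullLaw_comp, ← LinearMap.comp_assoc, ← hu, LinearMap.coprod_inr] at this
  have h3 := hzu () (Finset.mem_singleton_self _)
  rw [map_sub, sub_eq_zero] at h3
  rw [h1, h2, LinearMap.comp_apply, LinearMap.comp_apply, symMap_comp, symMap_comp]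
  exact congrArg G (Subtype.ext h3)

/-- The maps representing the pullbacks of `f` to finite free modules glue to a map on
`TS^d(M)`. -/
lemma exists_glue [Module.Flat A M]
    (hex : ∀ (L : Type u) [AddCommGroup L] [Module A L] [Module.Free A L] [Module.Finite A L]
      (φ : L →ₗ[A] M), ∃ ft : symmetricTensors A L d →ₗ[A] N, IsRep d (pullLaw f φ) ft) :
    ∃ ft : symmetricTensors A M d →ₗ[A] N, ∀ (L : Type u) [AddCommGroup L] [Module A L]
      [Module.Free A L] [Module.Finite A L] (φ : L →ₗ[A] M),
        IsRep d (pullLaw f φ) (ft ∘ₗ symMap d φ) := by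
  have hval : ∀ t : symmetricTensors A M d, ∃ n : N, ∀ (L : Type u) [AddCommGroup L] [Module A L]
      [Module.Free A L] [Module.Finite A L] (φ : L →ₗ[A] M) (F : symmetricTensors A L d →ₗ[A] N)
      (y : symmetricTensors A L d), IsRep d (pullLaw f φ) F → symMap d φ y = t → F y = n := by
    intro t
    obtain ⟨K, _, _, _, _, φ, y, rfl⟩ := exists_lift_sym d t
    obtain ⟨F, hF⟩ := hex K φ
    exact ⟨F y, fun L _ _ _ _ φ' F' y' hF' h => rep_eq_of_symMap_eq d f hex hF' hF h⟩
  choose g hg using hval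
  refine ⟨{ toFun := g, map_add' := ?_, map_smul' := ?_ }, ?_⟩
  · intro s t
    obtain ⟨K, _, _, _, _, φ, y, hy⟩ := exists_lift_sym d s
    obtain ⟨K', _, _, _, _, φ', y', hy'⟩ := exists_lift_sym d t
    obtain ⟨F, hF⟩ := hex _ (φ.coprod φ')
    have e1 : symMap d (φ.coprod φ') (symMap d (LinearMap.inl A K K') y) = s := by
      rw [← symMap_comp, LinearMap.coprod_inl, hy]
    have e2 : symMap d (φ.coprod φ') (symMap d (LinearMap.inr A K K') y') = t := by
      rw [← symMap_comp, LinearMap.coprod_inr, hy']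
    rw [← hg s _ _ F _ hF e1, ← hg t _ _ F _ hF e2, ← map_add]
    exact (hg _ _ _ F _ hF (by rw [map_add, e1, e2])).symm
  · intro c t
    obtain ⟨K, _, _, _, _, φ, y, hy⟩ := exists_lift_sym d t
    obtain ⟨F, hF⟩ := hex _ φ
    rw [RingHom.id_apply, ← hg t _ _ F _ hF hy, ← map_smul]
    exact (hg _ _ _ F _ hF (by rw [map_smul, hy])).symm
  · intro L _ _ _ _ φ
    obtain ⟨F, hF⟩ := hex _ φ
    convert hF using 1
    ext y
    exact (hg _ _ φ F y hF rfl).symm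

/-- A linear map on `TS^d(M)` represents `f` as soon as it does so after pullback to all finite
free modules. -/
lemma isRep_of_pull [Module.Flat A M] (ft : symmetricTensors A M d →ₗ[A] N)
    (h : ∀ (L : Type u) [AddCommGroup L] [Module A L] [Module.Free A L] [Module.Finite A L]
      (φ : L →ₗ[A] M), IsRep d (pullLaw f φ) (ft ∘ₗ symMap d φ)) : IsRep d f ft := by
  intro B _ _ m x hx
  obtain ⟨K, _, _, _, _, φ, x', m', rfl, rfl⟩ := exists_lift_baseChange d B x m
  -- The relation `x = m^{⊗ d}` already holds in some finite free module between `K` and `M`.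
  obtain ⟨n, u, ψ, rfl, hu⟩ := factor_of_flat d B K φ
    (symmetricTensorsBaseChange A K d B x' - PiTensorProduct.tprod B fun _ => m') (by
      rw [map_sub, ← symmetricTensorsBaseChange_map, hx, tensorPowMap_tprod, sub_self])
  have key := h _ ψ B (u.baseChange B m') ((symMap d u).baseChange B x') (by
    rw [symmetricTensorsBaseChange_map, ← sub_eq_zero, ← hu, map_sub, tensorPowMap_tprod])
  have e : symMap d (ψ ∘ₗ u) = symMap d ψ ∘ₗ symMap d u := by
    ext1 y
    exact symMap_comp d ψ u y
  rw [e, LinearMap.baseChange_comp, LinearMap.baseChange_comp]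
  rw [LinearMap.baseChange_comp] at key
  exact key

lemma isRep_unique [Module.Flat A M] (g g' : symmetricTensors A M d →ₗ[A] N) (hg : IsRep d f g)
    (hg' : IsRep d f g') : g = g' := by
  ext t
  obtain ⟨K, _, _, _, _, φ, y, rfl⟩ := exists_lift_sym d t
  exact LinearMap.congr_fun
    (isRep_unique_of_free d _ _ _ (hg.pull d f φ) (hg'.pull d f φ)) y

end Aux4

/-- Let `M` be a flat `A`-module, `N` an `A`-module and `d ≥ 0`. Let `f` be a polynomial law
from `M` to `N` (a natural family of maps `f_B : B ⊗_A M → B ⊗_A N` over commutative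
`A`-algebras `B`) which is homogeneous of degree `d`. Then there is a unique `A`-linear map
`f̃ : TS^d_A(M) → N` such that for every `B` and every `m ∈ B ⊗_A M`, the base change of `f̃`
sends the unique element `x ∈ B ⊗_A TS^d_A(M)` corresponding (under the base-change
isomorphism onto `TS^d_B(B ⊗_A M)`, bijective by flatness) to the symmetric tensor `m^{⊗ d}`
to `f_B(m)`. -/
theorem polynomialLaw_homogeneous_factors (A : Type u) [CommRing A]
    (M : Type u) [AddCommGroup M] [Module A M] (N : Type u) [AddCommGroup N] [Module A N]
    (d : ℕ) [Module.Flat A M]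
    (f : (B : Type u) → [CommRing B] → [Algebra A B] → B ⊗[A] M → B ⊗[A] N)
    (hnat : ∀ (B B' : Type u) [CommRing B] [Algebra A B] [CommRing B'] [Algebra A B']
      (g : B →ₐ[A] B') (m : B ⊗[A] M),
        f B' (LinearMap.rTensor M g.toLinearMap m) = LinearMap.rTensor N g.toLinearMap (f B m))
    (hhom : ∀ (B : Type u) [CommRing B] [Algebra A B] (c : B) (m : B ⊗[A] M),
        f B (c • m) = c ^ d • f B m) :
    ∃! ft : symmetricTensors A M d →ₗ[A] N,
      ∀ (B : Type u) [CommRing B] [Algebra A B] (m : B ⊗[A] M)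
        (x : B ⊗[A] (symmetricTensors A M d)),
          symmetricTensorsBaseChange A M d B x = PiTensorProduct.tprod B (fun _ => m) →
          LinearMap.baseChange B ft x = f B m := by
  obtain ⟨ft, hft⟩ := exists_glue (M := M) (N := N) d f
    fun L _ _ _ _ φ => exists_isRep_pullLaw d f hnat hhom φ
  exact ⟨ft, isRep_of_pull d f ft hft, fun g hg =>
    isRep_unique d f g ft hg (isRep_of_pull d f ft hft)⟩
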